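/- arXiv:0812.0730 — 2 statements merged into one kernel-verified Lean document; each statement's English description precedes it below -/
import Mathlib

section
/- Let α > -1, 0 < t ≤ 2, a ≠ 0, and n ≥ 1. Define R_n(x) = L_n^α(x) + a·L_n^{α+t}(x). If x and x' are consecutive zeros of L_n^α, then R_n(x)·R_n(x') < 0. -/
open Finset

/-- Generalized Laguerre polynomial `L_n^α(x) = ∑_{k=0}^n (-1)^k C(n+α, n-k) x^k / k!`,
where `C(n+α, n-k) = (∏_{i=1}^{n-k} (α+k+i)) / (n-k)!`. -/
noncomputable def laguerre (α : ℝ) (n : ℕ) (x : ℝ) : ℝ :=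
  ∑ k ∈ Finset.range (n + 1),
    (-1 : ℝ) ^ k * (∏ i ∈ Finset.range (n - k), (α + k + 1 + i)) /
      ((Nat.factorial (n - k) : ℝ) * (Nat.factorial k : ℝ)) * x ^ k

/-! ### One-sided sign lemmas for derivatives -/

lemma HasDerivAt.nonneg_of_pos_right {f : ℝ → ℝ} {f' x y : ℝ} (h : HasDerivAt f f' x)
    (hxy : x < y) (h0 : f x = 0) (hpos : ∀ u ∈ Set.Ioo x y, 0 < f u) : 0 ≤ f' := by
  have h1 := (hasDerivWithinAt_iff_tendsto_slope' (s := Set.Ioi x) (by simp)).1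
    h.hasDerivWithinAt
  refine ge_of_tendsto h1 ?_
  filter_upwards [Ioo_mem_nhdsGT hxy] with u hu
  rw [slope_def_field, h0, sub_zero]
  exact div_nonneg (hpos u hu).le (sub_nonneg.2 hu.1.le)

lemma HasDerivAt.nonpos_of_pos_left {f : ℝ → ℝ} {f' x y : ℝ} (h : HasDerivAt f f' y)
    (hxy : x < y) (h0 : f y = 0) (hpos : ∀ u ∈ Set.Ioo x y, 0 < f u) : f' ≤ 0 := by
  have h1 := (hasDerivWithinAt_iff_tendsto_slope' (s := Set.Iio y) (by simp)).1
    h.hasDerivWithinAt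
  refine le_of_tendsto h1 ?_
  filter_upwards [Ioo_mem_nhdsLT hxy] with u hu
  rw [slope_def_field, h0, sub_zero]
  exact div_nonpos_of_nonneg_of_nonpos (hpos u hu).le (sub_nonpos.2 hu.2.le)

/-- A continuous function without zeros on a preconnected set has constant sign there. -/
lemma IsPreconnected.mul_pos_of_ne_zero {f : ℝ → ℝ} {s : Set ℝ} (hs : IsPreconnected s)
    (hf : ContinuousOn f s) (hne : ∀ u ∈ s, f u ≠ 0) {u v : ℝ} (hu : u ∈ s) (hv : v ∈ s) :
    0 < f u * f v := by
  by_contra! hle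
  have key : ∃ w ∈ s, f w = 0 := by
    rcases mul_nonpos_iff.1 hle with ⟨h1, h2⟩ | ⟨h1, h2⟩
    · exact hs.intermediate_value hv hu hf ⟨h2, h1⟩
    · exact hs.intermediate_value hu hv hf ⟨h1, h2⟩
  obtain ⟨w, hw, hw0⟩ := key
  exact hne w hw hw0

/-- The derivatives at consecutive zeros do not have the same strict sign. -/
lemma deriv_mul_deriv_nonpos_of_consecutive_zeros {f f' : ℝ → ℝ} {x y : ℝ} (hxy : x < y)
    (hf : Continuous f) (hx' : HasDerivAt f (f' x) x) (hy' : HasDerivAt f (f' y) y)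
    (hx : f x = 0) (hy : f y = 0)
    (hne : ∀ u ∈ Set.Ioo x y, f u ≠ 0) : f' x * f' y ≤ 0 := by
  have hm : (x + y) / 2 ∈ Set.Ioo x y := ⟨by linarith, by linarith⟩
  have hsign := fun u (hu : u ∈ Set.Ioo x y) =>
    isPreconnected_Ioo.mul_pos_of_ne_zero hf.continuousOn hne hm hu
  set c := f ((x + y) / 2)
  have hc0 : c ≠ 0 := hne _ hm
  have h1 := (hx'.const_mul c).nonneg_of_pos_right hxy (by simp [hx]) hsign
  have h2 := (hy'.const_mul c).nonpos_of_pos_left hxy (by simp [hy]) hsign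
  have h3 := mul_nonpos_of_nonneg_of_nonpos h1 h2
  have h4 : 0 < c ^ 2 := by positivity
  by_contra! h
  nlinarith [mul_pos h4 h]

/-- A function that is positive at `1` and decreases strictly through each of its zeros in
`(0, 1)` is positive on `(0, 1]`. -/
lemma pos_of_deriv_neg_at_zeros {f f' : ℝ → ℝ} (hf : ∀ r, HasDerivAt f (f' r) r)
    (h1 : 0 < f 1) (hz : ∀ r ∈ Set.Ioo (0 : ℝ) 1, f r = 0 → f' r < 0) :
    ∀ r ∈ Set.Ioc (0 : ℝ) 1, 0 < f r := by
  intro r hr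
  by_contra! hle
  have hc : Continuous f := continuous_iff_continuousAt.2 fun r => (hf r).continuousAt
  have hK : IsCompact (Set.Icc r 1 ∩ f ⁻¹' {0}) :=
    isCompact_Icc.inter_right (isClosed_singleton.preimage hc)
  obtain ⟨w, hw, hw0⟩ := intermediate_value_Icc hr.2 hc.continuousOn ⟨hle, h1.le⟩
  obtain ⟨z, ⟨hz1, hz0⟩, hmax⟩ := hK.exists_isGreatest ⟨w, hw, hw0⟩
  have hz0 : f z = 0 := hz0
  have hzlt : z < 1 := lt_of_le_of_ne hz1.2 fun h => by rw [h] at hz0; exact h1.ne' hz0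
  have hne : ∀ u ∈ Set.Ioc z 1, f u ≠ 0 := fun u hu hu0 =>
    absurd (hmax ⟨⟨hz1.1.trans hu.1.le, hu.2⟩, hu0⟩) (not_le.2 hu.1)
  have hpos : ∀ u ∈ Set.Ioo z 1, 0 < f u := fun u hu =>
    pos_of_mul_pos_right (isPreconnected_Ioc.mul_pos_of_ne_zero hc.continuousOn hne
      ⟨hzlt, le_rfl⟩ ⟨hu.1, hu.2.le⟩) h1.le
  exact absurd ((hf z).nonneg_of_pos_right hzlt hz0 hpos)
    (not_le.2 (hz z ⟨hr.1.trans_le hz1.1, hzlt⟩ hz0))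

/-! ### Generalized binomial coefficients -/

/-- The generalized binomial coefficient `C(a + m, m)`. -/
noncomputable def binomCoeff (m : ℕ) (a : ℝ) : ℝ :=
  (∏ i ∈ Finset.range m, (a + 1 + i)) / (m.factorial : ℝ)

@[simp] lemma binomCoeff_zero (a : ℝ) : binomCoeff 0 a = 1 := by simp [binomCoeff]

lemma binomCoeff_succ (m : ℕ) (a : ℝ) :
    binomCoeff (m + 1) a = (a + m + 1) / (m + 1) * binomCoeff m a := by
  have h : (m.factorial : ℝ) ≠ 0 := by positivity
  have h' : (m : ℝ) + 1 ≠ 0 := by positivity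
  simp only [binomCoeff, Finset.prod_range_succ, Nat.factorial_succ]
  push_cast
  field_simp
  ring

lemma succ_mul_binomCoeff_succ (m : ℕ) (a : ℝ) :
    (m + 1) * binomCoeff (m + 1) a = (a + m + 1) * binomCoeff m a := by
  have h' : (m : ℝ) + 1 ≠ 0 := by positivity
  rw [binomCoeff_succ]
  field_simp

lemma binomCoeff_pascal (m : ℕ) (a : ℝ) :
    binomCoeff (m + 1) (a + 1) = binomCoeff (m + 1) a + binomCoeff m (a + 1) := by
  induction m with
  | zero => simp [binomCoeff_succ]
  | succ m ih =>
    have h1 : (m : ℝ) + 1 ≠ 0 := by positivity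
    have h2 : (m : ℝ) + 2 ≠ 0 := by positivity
    have e1 := succ_mul_binomCoeff_succ (m + 1) (a + 1)
    have e2 := succ_mul_binomCoeff_succ (m + 1) a
    have e3 := succ_mul_binomCoeff_succ m (a + 1)
    push_cast at e1 e2 e3
    refine mul_left_cancel₀ h2 ?_
    linear_combination e1 - e2 - e3 + (a + m + 2) * ih

lemma binomCoeff_pos (m : ℕ) {a : ℝ} (ha : -1 < a) : 0 < binomCoeff m a := by
  refine div_pos (Finset.prod_pos fun i _ => ?_) (by positivity)
  have : (0 : ℝ) ≤ i := by positivity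
  linarith

lemma hasDerivAt_binomCoeff (m : ℕ) (a : ℝ) :
    HasDerivAt (binomCoeff m) (∑ j ∈ Finset.range m, binomCoeff j a / ((m : ℝ) - j)) a := by
  induction m with
  | zero =>
    have : binomCoeff 0 = fun _ => (1 : ℝ) := funext binomCoeff_zero
    rw [this]
    simpa using hasDerivAt_const a (1 : ℝ)
  | succ m ih =>
    have hfun : binomCoeff (m + 1) = fun a => (a + m + 1) / (m + 1) * binomCoeff m a :=
      funext (binomCoeff_succ m)
    have h1 : HasDerivAt (fun a : ℝ => (a + m + 1) / (m + 1)) (1 / (m + 1 : ℝ)) a :=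
      (((hasDerivAt_id a).add_const _).add_const _).div_const _
    rw [hfun]
    refine (h1.fun_mul ih).congr_deriv (Eq.symm ?_)
    have hm : (m : ℝ) + 1 ≠ 0 := by positivity
    refine mul_left_cancel₀ hm ?_
    have hR : ((m : ℝ) + 1) * (1 / (m + 1) * binomCoeff m a + (a + m + 1) / (m + 1) *
        ∑ j ∈ Finset.range m, binomCoeff j a / ((m : ℝ) - j)) =
        binomCoeff m a + (a + m + 1) *
        ∑ j ∈ Finset.range m, binomCoeff j a / ((m : ℝ) - j) := by
      field_simp
    rw [hR]
    have e1 : ((m : ℝ) + 1) * ∑ j ∈ Finset.range (m + 1), binomCoeff j a / (((m + 1 : ℕ) : ℝ) - j)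
        = ∑ j ∈ Finset.range (m + 1), binomCoeff j a +
          ∑ j ∈ Finset.range (m + 1), j * binomCoeff j a / ((m : ℝ) + 1 - j) := by
      rw [Finset.mul_sum, ← Finset.sum_add_distrib]
      refine Finset.sum_congr rfl fun j hj => ?_
      have : (j : ℝ) < m + 1 := by exact_mod_cast Finset.mem_range.1 hj
      have : (m : ℝ) + 1 - j ≠ 0 := by linarith
      push_cast
      field_simp
      ring
    have e2 : ∑ j ∈ Finset.range (m + 1), j * binomCoeff j a / ((m : ℝ) + 1 - j) =
        (a + m + 1) * ∑ j ∈ Finset.range m, binomCoeff j a / ((m : ℝ) - j) -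
          ∑ j ∈ Finset.range m, binomCoeff j a := by
      rw [Finset.sum_range_succ', Finset.mul_sum, ← Finset.sum_sub_distrib]
      simp only [Nat.cast_zero, zero_mul, zero_div, add_zero]
      refine Finset.sum_congr rfl fun j hj => ?_
      have : (j : ℝ) < m := by exact_mod_cast Finset.mem_range.1 hj
      have : (m : ℝ) - j ≠ 0 := by linarith
      have h3 := succ_mul_binomCoeff_succ j a
      push_cast
      rw [h3]
      have h4 : (m : ℝ) + 1 - (j + 1) = m - j := by ring
      rw [h4]
      field_simp
      ring
    rw [e1, e2, Finset.sum_range_succ]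
    ring

lemma natCast_add_one_add_pos (n : ℕ) {s : ℝ} (hs : -1 < s) : 0 < (n : ℝ) + 1 + s := by
  have : (0 : ℝ) ≤ n := n.cast_nonneg
  linarith

/-! ### Laguerre polynomials: identities -/

lemma laguerre_eq_sum_antidiagonal (s : ℝ) (n : ℕ) (x : ℝ) :
    laguerre s n x = ∑ p ∈ antidiagonal n,
      (-x) ^ p.1 / (p.1.factorial : ℝ) * binomCoeff p.2 (s + p.1) := by
  rw [Finset.Nat.sum_antidiagonal_eq_sum_range_succ
    (fun k m => (-x) ^ k / (k.factorial : ℝ) * binomCoeff m (s + k)), laguerre]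
  refine Finset.sum_congr rfl fun k _ => ?_
  rw [binomCoeff, neg_pow x k]
  have h1 : (k.factorial : ℝ) ≠ 0 := by positivity
  have h2 : ((n - k).factorial : ℝ) ≠ 0 := by positivity
  field_simp

@[simp] lemma laguerre_zero (s x : ℝ) : laguerre s 0 x = 1 := by simp [laguerre]

lemma laguerre_pos_of_nonpos {s : ℝ} (hs : -1 < s) (n : ℕ) {x : ℝ} (hx : x ≤ 0) :
    0 < laguerre s n x := by
  rw [laguerre_eq_sum_antidiagonal]
  have hb : ∀ p : ℕ × ℕ, 0 < binomCoeff p.2 (s + p.1) := fun p =>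
    binomCoeff_pos _ (by linarith [p.1.cast_nonneg (α := ℝ)])
  refine Finset.sum_pos' (fun p _ => ?_) ⟨(0, n), by simp, ?_⟩
  · have := hb p
    have : 0 ≤ -x := by linarith
    positivity
  · simpa using hb (0, n)

lemma laguerre_succ_add_one (s : ℝ) (n : ℕ) (x : ℝ) :
    laguerre (s + 1) (n + 1) x = laguerre s (n + 1) x + laguerre (s + 1) n x := by
  simp only [laguerre_eq_sum_antidiagonal, Finset.Nat.antidiagonal_succ', Finset.sum_cons,
    Finset.sum_map, binomCoeff_zero, Function.Embedding.prodMap, Function.Embedding.coeFn_mk,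
    Prod.map, Function.Embedding.refl_apply, Nat.succ_eq_add_one]
  rw [add_assoc, ← Finset.sum_add_distrib]
  congr 1
  refine Finset.sum_congr rfl fun p _ => ?_
  rw [add_right_comm s 1, binomCoeff_pascal]
  ring

lemma mul_laguerre_add_one (s : ℝ) (n : ℕ) (x : ℝ) :
    x * laguerre (s + 1) n x =
      (n + 1 + s) * laguerre s n x - (n + 1) * laguerre s (n + 1) x := by
  set w : ℕ → ℝ := fun k => (-x) ^ k / (k.factorial : ℝ) with hw
  have hws : ∀ k : ℕ, ((k : ℝ) + 1) * w (k + 1) = -x * w k := fun k => by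
    have h1 : (k.factorial : ℝ) ≠ 0 := by positivity
    have h2 : (k : ℝ) + 1 ≠ 0 := by positivity
    simp only [hw, Nat.factorial_succ]
    push_cast
    field_simp
    ring
  have e : ((n : ℝ) + 1) * laguerre s (n + 1) x =
      ∑ p ∈ antidiagonal (n + 1), p.1 * w p.1 * binomCoeff p.2 (s + p.1) +
      ∑ p ∈ antidiagonal (n + 1), w p.1 * (p.2 * binomCoeff p.2 (s + p.1)) := by
    rw [laguerre_eq_sum_antidiagonal, Finset.mul_sum, ← Finset.sum_add_distrib]
    refine Finset.sum_congr rfl fun p hp => ?_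
    have : (p.1 : ℝ) + p.2 = n + 1 := by exact_mod_cast HasAntidiagonal.mem_antidiagonal.1 hp
    rw [← this]
    ring
  have e1 : ∑ p ∈ antidiagonal (n + 1), p.1 * w p.1 * binomCoeff p.2 (s + p.1) =
      -x * laguerre (s + 1) n x := by
    rw [laguerre_eq_sum_antidiagonal, Finset.Nat.sum_antidiagonal_succ, Finset.mul_sum]
    simp only [Nat.cast_zero, zero_mul, zero_add]
    refine Finset.sum_congr rfl fun p _ => ?_
    have := hws p.1
    push_cast
    rw [this, add_assoc s 1, add_comm (1 : ℝ)]
    ring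
  have e2 : ∑ p ∈ antidiagonal (n + 1), w p.1 * (p.2 * binomCoeff p.2 (s + p.1)) =
      (n + 1 + s) * laguerre s n x := by
    rw [laguerre_eq_sum_antidiagonal, Finset.Nat.sum_antidiagonal_succ', Finset.mul_sum]
    simp only [Nat.cast_zero, zero_mul, mul_zero, zero_add]
    refine Finset.sum_congr rfl fun p hp => ?_
    have h1 : (p.1 : ℝ) + p.2 = n := by exact_mod_cast HasAntidiagonal.mem_antidiagonal.1 hp
    have := succ_mul_binomCoeff_succ p.2 (s + p.1)
    push_cast
    rw [this, ← h1]
    ring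
  rw [e, e1, e2]
  ring

lemma laguerre_one (s x : ℝ) : laguerre s 1 x = 1 + s - x := by
  have := mul_laguerre_add_one s 0 x
  simp at this
  linarith

lemma laguerre_recurrence (s : ℝ) (n : ℕ) (x : ℝ) :
    (n + 2) * laguerre s (n + 2) x =
      (2 * n + 3 + s - x) * laguerre s (n + 1) x - (n + 1 + s) * laguerre s n x := by
  have h1 := mul_laguerre_add_one s n x
  have h2 := mul_laguerre_add_one s (n + 1) x
  have h3 := laguerre_succ_add_one s n x
  push_cast at h2
  linear_combination h2 - h1 - x * h3

lemma mul_laguerre_add_two (s : ℝ) (n : ℕ) (x : ℝ) :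
    x * laguerre (s + 2) (n + 1) x =
      (s + 1 + x) * laguerre (s + 1) (n + 1) x - (n + s + 2) * laguerre s (n + 1) x := by
  have h1 := mul_laguerre_add_one (s + 1) n x
  have h2 := laguerre_succ_add_one (s + 1) n x
  have h3 := laguerre_succ_add_one s n x
  have : s + 1 + 1 = s + 2 := by ring
  rw [this] at h1 h2
  linear_combination h1 + x * h2 - (n + s + 2) * h3

lemma hasDerivAt_laguerre_succ (s : ℝ) (n : ℕ) (x : ℝ) :
    HasDerivAt (laguerre s (n + 1)) (-laguerre (s + 1) n x) x := by
  have hfun : laguerre s (n + 1) = fun x => ∑ p ∈ antidiagonal (n + 1),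
      (-x) ^ p.1 / (p.1.factorial : ℝ) * binomCoeff p.2 (s + p.1) :=
    funext (laguerre_eq_sum_antidiagonal s (n + 1))
  have h := HasDerivAt.fun_sum (u := antidiagonal (n + 1)) fun p _ =>
    ((((hasDerivAt_id x).neg.fun_pow p.1).div_const (p.1.factorial : ℝ)).mul_const
      (binomCoeff p.2 (s + p.1)))
  rw [hfun]
  refine h.congr_deriv (Eq.symm ?_)
  rw [laguerre_eq_sum_antidiagonal, Finset.Nat.sum_antidiagonal_succ, ← Finset.sum_neg_distrib]
  simp only [Nat.cast_zero, zero_mul, zero_div, zero_add]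
  refine Finset.sum_congr rfl fun p _ => ?_
  have h1 : (p.1.factorial : ℝ) ≠ 0 := by positivity
  have h2 : (p.1 : ℝ) + 1 ≠ 0 := by positivity
  simp only [Nat.factorial_succ, Nat.add_sub_cancel, Pi.neg_apply, id]
  push_cast
  rw [add_assoc s 1, add_comm (1 : ℝ)]
  field_simp

lemma continuous_laguerre (s : ℝ) (n : ℕ) : Continuous (laguerre s n) := by
  unfold laguerre
  fun_prop

lemma hasDerivAt_laguerre_param (n : ℕ) (x s : ℝ) :
    HasDerivAt (fun s => laguerre s n x)
      (∑ m ∈ Finset.range n, laguerre s m x / ((n : ℝ) - m)) s := by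
  have hfun : (fun s => laguerre s n x) = fun s => ∑ k ∈ Finset.range (n + 1),
      (-x) ^ k / (k.factorial : ℝ) * binomCoeff (n - k) (s + k) := by
    funext s
    rw [laguerre_eq_sum_antidiagonal, Finset.Nat.sum_antidiagonal_eq_sum_range_succ
      (fun k m => (-x) ^ k / (k.factorial : ℝ) * binomCoeff m (s + k))]
  rw [hfun]
  have h := HasDerivAt.fun_sum (u := Finset.range (n + 1)) fun k _ =>
    ((hasDerivAt_binomCoeff (n - k) (s + k)).comp_add_const s (k : ℝ)).const_mul
      ((-x) ^ k / (k.factorial : ℝ))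
  refine h.congr_deriv (Eq.symm ?_)
  have e : ∀ m ∈ Finset.range n, laguerre s m x / ((n : ℝ) - m) =
      ∑ k ∈ Finset.range (m + 1), (-x) ^ k / (k.factorial : ℝ) *
        (binomCoeff (m - k) (s + k) / ((n : ℝ) - m)) := fun m _ => by
    rw [laguerre_eq_sum_antidiagonal, Finset.Nat.sum_antidiagonal_eq_sum_range_succ
      (fun k m => (-x) ^ k / (k.factorial : ℝ) * binomCoeff m (s + k)), Finset.sum_div]
    exact Finset.sum_congr rfl fun k _ => by ring
  rw [Finset.sum_congr rfl e]
  simp only [Finset.mul_sum]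
  rw [Finset.sum_sigma', Finset.sum_sigma']
  refine Finset.sum_bij' (fun p _ => ⟨p.2, p.1 - p.2⟩) (fun p _ => ⟨p.1 + p.2, p.1⟩)
    ?_ ?_ ?_ ?_ ?_
  · rintro ⟨m, k⟩ hp
    simp only [Finset.mem_sigma, Finset.mem_range] at hp ⊢
    omega
  · rintro ⟨k, j⟩ hp
    simp only [Finset.mem_sigma, Finset.mem_range] at hp ⊢
    omega
  · rintro ⟨m, k⟩ hp
    simp only [Finset.mem_sigma, Finset.mem_range] at hp
    simp only [Sigma.mk.injEq, heq_eq_eq, and_true]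
    omega
  · rintro ⟨k, j⟩ hp
    simp
  · rintro ⟨m, k⟩ hp
    simp only [Finset.mem_sigma, Finset.mem_range] at hp
    simp only
    rw [Nat.cast_sub (by omega), Nat.cast_sub (by omega)]
    congr 2
    ring

lemma exists_polynomial_eval_eq_laguerre (n : ℕ) (x : ℝ) :
    ∃ P : Polynomial ℝ, ∀ s, P.eval s = laguerre s n x := by
  refine ⟨∑ k ∈ Finset.range (n + 1), Polynomial.C ((-1 : ℝ) ^ k /
    ((Nat.factorial (n - k) : ℝ) * (Nat.factorial k : ℝ)) * x ^ k) *
    ∏ i ∈ Finset.range (n - k), (Polynomial.X + Polynomial.C ((k : ℝ) + 1 + i)),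
    fun s => ?_⟩
  rw [laguerre, Polynomial.eval_finsetSum]
  refine Finset.sum_congr rfl fun k _ => ?_
  simp only [Polynomial.eval_mul, Polynomial.eval_C, Polynomial.eval_prod, Polynomial.eval_add,
    Polynomial.eval_X, ← add_assoc]
  ring

/-! ### Monotonicity of the zeros in the parameter -/

/-- The reversed truncated generating function `∑_{k < n} L_k^s(x) r^(n-1-k)`. -/
noncomputable def laguerreTrunc (s x : ℝ) : ℕ → ℝ → ℝ
  | 0, _ => 0
  | n + 1, r => r * laguerreTrunc s x n r + laguerre s n x

/-- The derivative of `laguerreTrunc` in its last argument. -/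
noncomputable def laguerreTruncDeriv (s x : ℝ) : ℕ → ℝ → ℝ
  | 0, _ => 0
  | n + 1, r => laguerreTrunc s x n r + r * laguerreTruncDeriv s x n r

lemma hasDerivAt_laguerreTrunc (s x : ℝ) (n : ℕ) (r : ℝ) :
    HasDerivAt (laguerreTrunc s x n) (laguerreTruncDeriv s x n r) r := by
  induction n with
  | zero => exact hasDerivAt_const r (0 : ℝ)
  | succ n ih =>
    have h := ((hasDerivAt_id r).fun_mul ih).add_const (laguerre s n x)
    simp only [id, one_mul] at h
    exact h

lemma laguerreTrunc_ode (s x : ℝ) (n : ℕ) (r : ℝ) :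
    r * (1 - r) ^ 2 * laguerreTruncDeriv s x (n + 1) r =
      (n * (1 - r) ^ 2 + (s + 1) * (1 - r) + x * r) * laguerreTrunc s x (n + 1) r
        - (n + 1 + s) * laguerre s n x + (n + 1) * laguerre s (n + 1) x * r := by
  induction n with
  | zero => simp [laguerreTrunc, laguerreTruncDeriv, laguerre_one]; ring
  | succ n ih =>
    have h := laguerre_recurrence s n x
    have e1 : laguerreTrunc s x (n + 1 + 1) r =
      r * laguerreTrunc s x (n + 1) r + laguerre s (n + 1) x := rfl
    rw [laguerreTruncDeriv, e1]
    push_cast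
    linear_combination r * ih - r * h

lemma laguerreTrunc_eq_sum (s x : ℝ) (n : ℕ) (r : ℝ) :
    laguerreTrunc s x n r = ∑ m ∈ Finset.range n, laguerre s m x * r ^ (n - 1 - m) := by
  induction n with
  | zero => simp [laguerreTrunc]
  | succ n ih =>
    rw [laguerreTrunc, ih, Finset.sum_range_succ, Finset.mul_sum]
    simp only [Nat.add_sub_cancel, Nat.sub_self, pow_zero, mul_one]
    congr 1
    refine Finset.sum_congr rfl fun m hm => ?_
    have : n - m = n - 1 - m + 1 := by have := Finset.mem_range.1 hm; omega
    rw [this, pow_succ]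
    ring

lemma laguerre_ne_zero_of_succ_eq_zero {s : ℝ} (hs : -1 < s) {x : ℝ} (n : ℕ)
    (h : laguerre s (n + 1) x = 0) : laguerre s n x ≠ 0 := by
  induction n with
  | zero => simp
  | succ n ih =>
    intro h0
    have hr := laguerre_recurrence s n x
    have hn : (0 : ℝ) < n + 1 + s := natCast_add_one_add_pos n hs
    rw [h, h0] at hr
    have : laguerre s n x = 0 := by
      have : (n + 1 + s) * laguerre s n x = 0 := by linarith
      exact (mul_eq_zero.1 this).resolve_left hn.ne'
    exact ih h0 this

lemma pos_of_laguerre_eq_zero {s : ℝ} (hs : -1 < s) {n : ℕ} {x : ℝ}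
    (h : laguerre s n x = 0) : 0 < x := by
  by_contra! hx
  exact (laguerre_pos_of_nonpos hs n hx).ne' h

section Zero

variable {s x : ℝ} {n : ℕ}

lemma laguerreTrunc_mul_pos (hs : -1 < s) (h : laguerre s (n + 1) x = 0) :
    ∀ r ∈ Set.Ioc (0 : ℝ) 1, 0 < laguerre s n x * laguerreTrunc s x (n + 1) r := by
  have hx := pos_of_laguerre_eq_zero hs h
  have hL := laguerre_ne_zero_of_succ_eq_zero hs n h
  have hn : (0 : ℝ) < n + 1 + s := natCast_add_one_add_pos n hs
  have hode := laguerreTrunc_ode s x n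
  rw [h] at hode
  have hc : 0 < (n + 1 + s) * laguerre s n x ^ 2 := by positivity
  refine pos_of_deriv_neg_at_zeros
    (fun r => (hasDerivAt_laguerreTrunc s x (n + 1) r).const_mul (laguerre s n x)) ?_ ?_
  · have h1 := hode 1
    refine pos_of_mul_pos_right (a := x) ?_ hx.le
    refine hc.trans_eq ?_
    linear_combination laguerre s n x * h1
  · intro r hr h0
    have hf : laguerreTrunc s x (n + 1) r = 0 := (mul_eq_zero.1 h0).resolve_left hL
    have h1 := hode r
    rw [hf] at h1
    have hr1 : 0 < r * (1 - r) ^ 2 := mul_pos hr.1 (pow_pos (sub_pos.2 hr.2) 2)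
    by_contra! hle
    refine absurd (mul_nonneg hr1.le hle) (not_le.2 ((neg_lt_zero.2 hc).trans_eq' ?_))
    linear_combination -laguerre s n x * h1

/-- At a zero `x` of `L_{n+1}^s`, the derivative in the parameter has the sign of `L_n^s(x)`. -/
lemma laguerre_mul_deriv_param_pos (hs : -1 < s) (h : laguerre s (n + 1) x = 0) :
    0 < laguerre s n x *
      ∑ m ∈ Finset.range (n + 1), laguerre s m x / (((n + 1 : ℕ) : ℝ) - m) := by
  set H : ℝ → ℝ := fun r => laguerre s n x * ∑ m ∈ Finset.range (n + 1),
    laguerre s m x / (((n + 1 : ℕ) : ℝ) - m) * r ^ (n + 1 - m) with hH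
  have hd : ∀ r, HasDerivAt H (laguerre s n x * laguerreTrunc s x (n + 1) r) r := fun r => by
    refine HasDerivAt.const_mul _ ?_
    rw [laguerreTrunc_eq_sum]
    refine HasDerivAt.fun_sum fun m hm => ?_
    have hm' : m < n + 1 := Finset.mem_range.1 hm
    have hne : ((n + 1 : ℕ) : ℝ) - m ≠ 0 := sub_ne_zero.2 (by exact_mod_cast hm'.ne')
    refine ((hasDerivAt_pow (n + 1 - m) r).const_mul
      (laguerre s m x / (((n + 1 : ℕ) : ℝ) - m))).congr_deriv ?_
    rw [Nat.cast_sub hm'.le, Nat.sub_right_comm]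
    field_simp
  have hmono : StrictMonoOn H (Set.Icc 0 1) := by
    refine strictMonoOn_of_deriv_pos (convex_Icc 0 1)
      (fun r _ => (hd r).continuousAt.continuousWithinAt) fun r hr => ?_
    rw [interior_Icc] at hr
    rw [(hd r).deriv]
    exact laguerreTrunc_mul_pos hs h r ⟨hr.1, hr.2.le⟩
  have h01 := hmono (by simp) (by simp) zero_lt_one
  have h0 : H 0 = 0 := by
    rw [hH]
    simp only [mul_eq_zero]
    refine Or.inr (Finset.sum_eq_zero fun m hm => ?_)
    have : n + 1 - m ≠ 0 := by have := Finset.mem_range.1 hm; omega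
    simp [this]
  rw [h0] at h01
  simpa [hH] using h01

lemma laguerre_mul_add_two_pos (hs : -1 < s) (h : laguerre s (n + 1) x = 0) :
    0 < laguerre s n x * laguerre (s + 2) (n + 1) x := by
  have hx := pos_of_laguerre_eq_zero hs h
  have hL := laguerre_ne_zero_of_succ_eq_zero hs n h
  have hn : (0 : ℝ) < n + 1 + s := natCast_add_one_add_pos n hs
  have h1 := mul_laguerre_add_one s n x
  have h2 := laguerre_succ_add_one s n x
  have h3 := mul_laguerre_add_two s n x
  rw [h] at h1 h2 h3
  have hs' : 0 < s + 1 + x := by linarith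
  have hc : 0 < (s + 1 + x) * ((n + 1 + s) * laguerre s n x ^ 2) := by positivity
  refine pos_of_mul_pos_right (a := x ^ 2) ?_ (by positivity)
  refine hc.trans_eq ?_
  linear_combination -laguerre s n x * (x * h3 + (s + 1 + x) * (x * h2 + h1))

end Zero

/-- For fixed `x`, distinct zeros of `s ↦ L_{n+1}^s(x)` in `(-1, ∞)` are more than `2` apart. -/
lemma add_two_lt_of_laguerre_param_zeros {n : ℕ} {x : ℝ} {α β : ℝ} (hα : -1 < α) (hαβ : α < β)
    (h1 : laguerre α (n + 1) x = 0) (h2 : laguerre β (n + 1) x = 0) : α + 2 < β := by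
  by_contra! hle
  have hcont : Continuous fun s => laguerre s (n + 1) x :=
    continuous_iff_continuousAt.2 fun s => (hasDerivAt_laguerre_param (n + 1) x s).continuousAt
  have hfin : {s | laguerre s (n + 1) x = 0}.Finite := by
    obtain ⟨P, hP⟩ := exists_polynomial_eval_eq_laguerre (n + 1) x
    have hP0 : P ≠ 0 := by
      rintro rfl
      have := laguerre_mul_add_two_pos hα h1
      rw [← hP] at this
      simp at this
    refine (P.roots.toFinset.finite_toSet).subset fun s hs => ?_
    simp [hP0, hP, show laguerre s (n + 1) x = 0 from hs]
  set bad : Set ℝ := {b | laguerre b (n + 1) x = 0 ∧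
    ∃ a, -1 < a ∧ a < b ∧ b ≤ a + 2 ∧ laguerre a (n + 1) x = 0}
  obtain ⟨b, ⟨hb0, a', ha'1, ha'b, hba', ha'0⟩, hbmax⟩ :=
    Set.exists_max_image bad id (hfin.subset fun b hb => hb.1) ⟨β, h2, α, hα, hαβ, hle, h1⟩
  obtain ⟨a, ⟨ha0, hab, ha'a⟩, hamax⟩ :=
    Set.exists_max_image {a | laguerre a (n + 1) x = 0 ∧ a < b ∧ a' ≤ a} id
      (hfin.subset fun a ha => ha.1) ⟨a', ha'0, ha'b, le_rfl⟩
  have ha1 : -1 < a := ha'1.trans_le ha'a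
  have hne : ∀ u ∈ Set.Ioo a b, laguerre u (n + 1) x ≠ 0 := fun u hu hu0 =>
    absurd (hamax u ⟨hu0, hu.2, ha'a.trans hu.1.le⟩) (not_le.2 hu.1)
  have hd := deriv_mul_deriv_nonpos_of_consecutive_zeros
    (f' := fun s => ∑ m ∈ Finset.range (n + 1), laguerre s m x / (((n + 1 : ℕ) : ℝ) - m))
    hab hcont (hasDerivAt_laguerre_param (n + 1) x a) (hasDerivAt_laguerre_param (n + 1) x b)
    ha0 hb0 hne
  have hb1 := ha1.trans hab
  have pa := mul_pos (laguerre_mul_deriv_param_pos ha1 ha0) (laguerre_mul_add_two_pos ha1 ha0)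
  have pb := mul_pos (laguerre_mul_deriv_param_pos hb1 hb0) (laguerre_mul_add_two_pos hb1 hb0)
  have hex : ∃ c ∈ Set.Ioo (a + 2) (b + 2), laguerre c (n + 1) x = 0 := by
    by_contra! hno
    have hno' : ∀ u ∈ Set.Icc (a + 2) (b + 2), laguerre u (n + 1) x ≠ 0 := by
      intro u hu hu0
      rcases eq_or_lt_of_le hu.1 with rfl | hu1
      · simp [hu0] at pa
      rcases eq_or_lt_of_le hu.2 with rfl | hu2
      · simp [hu0] at pb
      exact hno u ⟨hu1, hu2⟩ hu0
    have hp := isPreconnected_Icc.mul_pos_of_ne_zero hcont.continuousOn hno'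
      (u := a + 2) (v := b + 2) ⟨le_rfl, by linarith⟩ ⟨by linarith, le_rfl⟩
    have hL : 0 < (laguerre a n x * laguerre b n x) ^ 2 := by
      have := laguerre_ne_zero_of_succ_eq_zero ha1 n ha0
      have := laguerre_ne_zero_of_succ_eq_zero hb1 n hb0
      positivity
    have := mul_pos pa pb
    have := mul_nonpos_of_nonneg_of_nonpos (mul_pos hL hp).le hd
    linarith
  obtain ⟨c, hc, hc0⟩ := hex
  have hbc : b < c := by linarith [hc.1]
  exact absurd (hbmax c ⟨hc0, b, hb1, hbc, hc.2.le, hb0⟩) (not_le.2 hbc)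

/-- At a zero `x` of `L_{n+1}^α`, `L_{n+1}^{α+t}(x)` has the sign of `L_n^α(x)` for
`0 < t ≤ 2`. -/
lemma laguerre_mul_add_pos {α t x : ℝ} {n : ℕ} (hα : -1 < α) (ht0 : 0 < t) (ht2 : t ≤ 2)
    (h : laguerre α (n + 1) x = 0) : 0 < laguerre α n x * laguerre (α + t) (n + 1) x := by
  have hcont : Continuous fun s => laguerre s (n + 1) x :=
    continuous_iff_continuousAt.2 fun s => (hasDerivAt_laguerre_param (n + 1) x s).continuousAt
  have hne : ∀ u ∈ Set.Ioc α (α + 2), laguerre u (n + 1) x ≠ 0 := fun u hu hu0 =>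
    absurd (add_two_lt_of_laguerre_param_zeros hα hu.1 h hu0) (not_lt.2 hu.2)
  have hp := isPreconnected_Ioc.mul_pos_of_ne_zero hcont.continuousOn hne
    (u := α + t) (v := α + 2) ⟨by linarith, by linarith⟩ ⟨by linarith, le_rfl⟩
  have h2 := laguerre_mul_add_two_pos hα h
  have h3 : laguerre (α + 2) (n + 1) x ≠ 0 := (mul_ne_zero_iff.1 h2.ne').2
  refine pos_of_mul_pos_right (a := laguerre (α + 2) (n + 1) x ^ 2) ?_ (by positivity)
  exact (mul_pos hp h2).trans_eq (by ring)

/-- `L_n^α` has opposite signs at consecutive zeros of `L_{n+1}^α`. -/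
lemma laguerre_mul_neg_of_consecutive_zeros {α x x' : ℝ} {n : ℕ} (hα : -1 < α) (hlt : x < x')
    (hx : laguerre α (n + 1) x = 0) (hx' : laguerre α (n + 1) x' = 0)
    (hcons : ∀ u ∈ Set.Ioo x x', laguerre α (n + 1) u ≠ 0) :
    laguerre α n x * laguerre α n x' < 0 := by
  have hd := deriv_mul_deriv_nonpos_of_consecutive_zeros (f' := fun x => -laguerre (α + 1) n x)
    hlt (continuous_laguerre α (n + 1)) (hasDerivAt_laguerre_succ α n x)
    (hasDerivAt_laguerre_succ α n x') hx hx' hcons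
  have hn : (0 : ℝ) < n + 1 + α := natCast_add_one_add_pos n hα
  have e := mul_laguerre_add_one α n x
  have e' := mul_laguerre_add_one α n x'
  rw [hx, mul_zero, sub_zero] at e
  rw [hx', mul_zero, sub_zero] at e'
  have hxx : 0 < x * x' :=
    mul_pos (pos_of_laguerre_eq_zero hα hx) (pos_of_laguerre_eq_zero hα hx')
  refine lt_of_le_of_ne ?_ (mul_ne_zero (laguerre_ne_zero_of_succ_eq_zero hα n hx)
    (laguerre_ne_zero_of_succ_eq_zero hα n hx'))
  refine nonpos_of_mul_nonpos_right (a := (n + 1 + α) ^ 2) ?_ (by positivity)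
  have := mul_nonpos_of_nonneg_of_nonpos hxx.le hd
  calc _ = ((n + 1 + α) * laguerre α n x) * ((n + 1 + α) * laguerre α n x') := by ring
    _ = x * x' * (-laguerre (α + 1) n x * -laguerre (α + 1) n x') := by rw [← e, ← e']; ring
    _ ≤ 0 := this

theorem R_sign_change_at_consecutive_zeros (α t a : ℝ) (hα : α > -1) (ht0 : 0 < t)
    (ht2 : t ≤ 2) (ha : a ≠ 0) (n : ℕ) (hn : 1 ≤ n)
    (R : ℝ → ℝ) (hR : ∀ x, R x = laguerre α n x + a * laguerre (α + t) n x)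
    (x x' : ℝ) (hlt : x < x') (hx : laguerre α n x = 0) (hx' : laguerre α n x' = 0)
    (hcons : ∀ u ∈ Set.Ioo x x', laguerre α n u ≠ 0) :
    R x * R x' < 0 := by
  obtain ⟨n, rfl⟩ : ∃ m, n = m + 1 := ⟨n - 1, by omega⟩
  have h1 := mul_pos (laguerre_mul_add_pos hα ht0 ht2 hx) (laguerre_mul_add_pos hα ht0 ht2 hx')
  have h2 := laguerre_mul_neg_of_consecutive_zeros hα hlt hx hx' hcons
  have h3 : laguerre (α + t) (n + 1) x * laguerre (α + t) (n + 1) x' < 0 := by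
    by_contra! h
    nlinarith [mul_nonpos_of_nonpos_of_nonneg h2.le h]
  rw [hR, hR, hx, hx']
  have ha2 : 0 < a ^ 2 := by positivity
  nlinarith [mul_neg_of_pos_of_neg ha2 h3]
end

section
/- Let α > -1, 0 < t ≤ 2, and n ≥ 2. Then the zeros of L_n^α and L_{n-1}^{α+t} strictly interlace: between any two consecutive zeros of L_n^α there lies exactly one zero of L_{n-1}^{α+t}, and all n-1 zeros of L_{n-1}^{α+t} lie strictly between the smallest and largest zeros of L_n^α. -/
open Finset

open Polynomial in
/-- The generalized Laguerre polynomial as an element of `ℝ[X]`. -/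
noncomputable def laguerrePoly (α : ℝ) (n : ℕ) : ℝ[X] :=
  ∑ k ∈ Finset.range (n + 1),
    C ((-1 : ℝ) ^ k * (∏ i ∈ Finset.range (n - k), (α + k + 1 + i)) /
      ((Nat.factorial (n - k) : ℝ) * (Nat.factorial k : ℝ))) * X ^ k

namespace laguerrePoly

open Polynomial Filter Topology

lemma eval_eq_laguerre (α : ℝ) (n : ℕ) (x : ℝ) :
    (laguerrePoly α n).eval x = laguerre α n x := by
  simp [laguerrePoly, laguerre, eval_finsetSum]

lemma coeff_of_le (α : ℝ) {n k : ℕ} (h : k ≤ n) :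
    (laguerrePoly α n).coeff k = (-1 : ℝ) ^ k * (∏ i ∈ Finset.range (n - k), (α + k + 1 + i)) /
      ((Nat.factorial (n - k) : ℝ) * (Nat.factorial k : ℝ)) := by
  simp only [laguerrePoly, finsetSum_coeff, coeff_C_mul, coeff_X_pow, mul_ite, mul_one, mul_zero]
  rw [Finset.sum_ite_eq, if_pos (Finset.mem_range.2 (by omega))]

lemma coeff_of_lt (α : ℝ) {n k : ℕ} (h : n < k) : (laguerrePoly α n).coeff k = 0 := by
  simp only [laguerrePoly, finsetSum_coeff, coeff_C_mul, coeff_X_pow, mul_ite, mul_one, mul_zero]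
  rw [Finset.sum_ite_eq, if_neg (by simpa using h)]

lemma natDegree_le (α : ℝ) (n : ℕ) : (laguerrePoly α n).natDegree ≤ n :=
  natDegree_le_iff_coeff_eq_zero.2 fun _ h => coeff_of_lt α h

lemma coeff_self_ne_zero (α : ℝ) (n : ℕ) : (laguerrePoly α n).coeff n ≠ 0 := by
  rw [coeff_of_le α le_rfl]
  simp [Nat.factorial_ne_zero]

lemma ne_zero (α : ℝ) (n : ℕ) : laguerrePoly α n ≠ 0 := fun h =>
  coeff_self_ne_zero α n (by simp [h])

lemma derivative_succ (α : ℝ) (n : ℕ) :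
    derivative (laguerrePoly α (n + 1)) = -laguerrePoly (α + 1) n := by
  ext k
  rw [coeff_derivative, coeff_neg]
  rcases le_or_gt k n with h | h
  · rw [coeff_of_le _ h, coeff_of_le _ (Nat.succ_le_succ h), Nat.succ_sub_succ,
      Nat.factorial_succ k, pow_succ]
    have hprod : ∏ i ∈ range (n - k), (α + (k + 1 : ℕ) + 1 + i) =
        ∏ i ∈ range (n - k), (α + 1 + k + 1 + i) :=
      prod_congr rfl fun i _ => by push_cast; ring
    rw [hprod]
    have h1 : (Nat.factorial (n - k) : ℝ) ≠ 0 := by positivity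
    have h2 : (Nat.factorial k : ℝ) ≠ 0 := by positivity
    push_cast
    field_simp
  · rw [coeff_of_lt _ h, coeff_of_lt _ (Nat.succ_lt_succ h)]
    simp

/-- Lowering the parameter while raising the degree; this is
`(x ^ (α + 1) * exp (-x) * L_n^{α+1})' = (n + 1) * x ^ α * exp (-x) * L_{n+1}^α`. -/
lemma X_mul_derivative_add (α : ℝ) (n : ℕ) :
    X * derivative (laguerrePoly (α + 1) n) + (C (α + 1) - X) * laguerrePoly (α + 1) n =
      C ((n : ℝ) + 1) * laguerrePoly α (n + 1) := by
  ext k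
  rw [sub_mul, coeff_add, coeff_sub, coeff_C_mul, coeff_C_mul]
  rcases k with _ | k
  · rw [coeff_of_le _ n.zero_le, coeff_of_le _ (n + 1).zero_le]
    simp only [coeff_X_mul_zero, Nat.sub_zero, Nat.factorial_succ, prod_range_succ']
    have hprod : ∏ i ∈ range n, (α + (0 : ℕ) + 1 + (i + 1 : ℕ)) =
        ∏ i ∈ range n, (α + 1 + (0 : ℕ) + 1 + i) :=
      prod_congr rfl fun i _ => by push_cast; ring
    rw [hprod]
    have h1 : (Nat.factorial n : ℝ) ≠ 0 := by positivity
    push_cast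
    field_simp
    ring
  · rw [coeff_X_mul, coeff_X_mul, coeff_derivative]
    rcases lt_trichotomy k n with h | rfl | h
    · obtain ⟨m, rfl⟩ : ∃ m, n = k + 1 + m := ⟨n - (k + 1), by omega⟩
      rw [coeff_of_le _ (by omega), coeff_of_le _ (by omega), coeff_of_le _ (by omega),
        show k + 1 + m - (k + 1) = m by omega, show k + 1 + m - k = m + 1 by omega,
        show k + 1 + m + 1 - (k + 1) = m + 1 by omega, Nat.factorial_succ m,
        Nat.factorial_succ k, pow_succ, prod_range_succ' _ m, prod_range_succ' _ m]
      have hprod : ∏ i ∈ range m, (α + (k + 1 : ℕ) + 1 + (i + 1 : ℕ)) =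
          ∏ i ∈ range m, (α + 1 + (k + 1 : ℕ) + 1 + i) :=
        prod_congr rfl fun i _ => by push_cast; ring
      have hprod' : ∏ i ∈ range m, (α + 1 + k + 1 + (i + 1 : ℕ)) =
          ∏ i ∈ range m, (α + 1 + (k + 1 : ℕ) + 1 + i) :=
        prod_congr rfl fun i _ => by push_cast; ring
      rw [hprod, hprod']
      have h1 : (Nat.factorial m : ℝ) ≠ 0 := by positivity
      have h2 : (Nat.factorial k : ℝ) ≠ 0 := by positivity
      push_cast
      field_simp
      ring
    · rw [coeff_of_lt _ (Nat.lt_succ_self k), coeff_of_le _ le_rfl, coeff_of_le _ le_rfl,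
        Nat.factorial_succ k, pow_succ]
      have h2 : (Nat.factorial k : ℝ) ≠ 0 := by positivity
      simp only [Nat.sub_self, range_zero, prod_empty, Nat.factorial_zero]
      push_cast
      field_simp
      ring
    · rw [coeff_of_lt _ h, coeff_of_lt _ (Nat.lt_succ_of_lt h), coeff_of_lt _ (Nat.succ_lt_succ h)]
      simp

/-- The Laguerre differential equation. -/
lemma differential_equation (α : ℝ) (n : ℕ) :
    X * derivative (derivative (laguerrePoly α n)) + (C (α + 1) - X) * derivative (laguerrePoly α n)
      + C (n : ℝ) * laguerrePoly α n = 0 := by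
  rcases n with _ | n
  · simp [laguerrePoly]
  · have h := X_mul_derivative_add α n
    rw [derivative_succ, derivative_neg]
    push_cast
    linear_combination -h

lemma tendsto_rpow_mul_exp_neg_mul_eval_atTop (s : ℝ) (p : ℝ[X]) :
    Tendsto (fun x : ℝ => x ^ s * Real.exp (-x) * p.eval x) atTop (𝓝 0) := by
  have h : ∀ k ∈ range (p.natDegree + 1),
      Tendsto (fun x : ℝ => p.coeff k * (x ^ (s + k) * Real.exp (-1 * x))) atTop (𝓝 0) :=
    fun k _ => by
      simpa using (tendsto_rpow_mul_exp_neg_mul_atTop_nhds_zero (s + k) 1 one_pos).const_mul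
        (p.coeff k)
  have hsum := tendsto_finsetSum _ h
  rw [sum_const_zero] at hsum
  refine hsum.congr' ?_
  filter_upwards [eventually_gt_atTop 0] with x hx
  rw [eval_eq_sum_range, mul_sum]
  refine sum_congr rfl fun k _ => ?_
  rw [Real.rpow_add hx, Real.rpow_natCast, neg_one_mul]
  ring

end laguerrePoly

open Filter Topology in
/-- **Rolle's theorem** on a half-line. -/
lemma exists_hasDerivAt_eq_zero_Ioi {f f' : ℝ → ℝ} {a l : ℝ} (hfa : Tendsto f (𝓝[>] a) (𝓝 l))
    (hftop : Tendsto f atTop (𝓝 l)) (hff' : ∀ x ∈ Set.Ioi a, HasDerivAt f (f' x) x) :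
    ∃ c ∈ Set.Ioi a, f' c = 0 := by
  have hmem : ∀ s ∈ Set.Ioo (0 : ℝ) 1, a - Real.log s ∈ Set.Ioi a := fun s hs =>
    Set.mem_Ioi.2 (by linarith [Real.log_neg hs.1 hs.2])
  have h0 : Tendsto (fun s : ℝ => a - Real.log s) (𝓝[>] 0) atTop :=
    tendsto_atTop_add_const_left _ a (tendsto_neg_atBot_atTop.comp Real.tendsto_log_nhdsGT_zero)
  have h1 : Tendsto (fun s : ℝ => a - Real.log s) (𝓝[<] 1) (𝓝[>] a) := by
    refine tendsto_nhdsWithin_iff.2 ⟨?_, ?_⟩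
    · have : ContinuousAt (fun s : ℝ => a - Real.log s) 1 :=
        continuousAt_const.sub (Real.continuousAt_log one_ne_zero)
      simpa using this.tendsto.mono_left nhdsWithin_le_nhds
    · filter_upwards [Ioo_mem_nhdsLT (zero_lt_one' ℝ)] with s hs using hmem s hs
  obtain ⟨s, hs, hs0⟩ := exists_hasDerivAt_eq_zero' (zero_lt_one' ℝ) (hftop.comp h0)
    (hfa.comp h1) fun s hs => (hff' _ (hmem s hs)).comp s
      ((Real.hasDerivAt_log hs.1.ne').const_sub a)
  exact ⟨_, hmem s hs, by simpa [hs.1.ne'] using hs0⟩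

namespace laguerrePoly

open Polynomial Filter Topology

lemma hasDerivAt_rpow_mul_exp_neg_mul_eval (α : ℝ) (n : ℕ) {x : ℝ} (hx : 0 < x) :
    HasDerivAt (fun x : ℝ => x ^ (α + 1) * Real.exp (-x) * (laguerrePoly (α + 1) n).eval x)
      (x ^ α * Real.exp (-x) * (((n : ℝ) + 1) * (laguerrePoly α (n + 1)).eval x)) x := by
  have h := congrArg (eval x) (X_mul_derivative_add α n)
  simp only [eval_add, eval_mul, eval_sub, eval_X, eval_C] at h
  refine (((Real.hasDerivAt_rpow_const (p := α + 1) (Or.inl hx.ne')).mul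
    (hasDerivAt_neg x).exp).mul ((laguerrePoly (α + 1) n).hasDerivAt x)).congr_deriv ?_
  rw [← h, add_sub_cancel_right, Pi.mul_apply, Real.rpow_add_one hx.ne']
  ring

lemma eq_C_mul_prod_of_roots {n : ℕ} {α : ℝ} {x : Fin n → ℝ} (hx : Function.Injective x)
    (hroot : ∀ i, (laguerrePoly α n).eval (x i) = 0) :
    laguerrePoly α n = C (laguerrePoly α n).leadingCoeff * ∏ i, (X - C (x i)) := by
  refine eq_leadingCoeff_mul_of_monic_of_dvd_of_natDegree_le
    (monic_prod_of_monic _ _ fun i _ => monic_X_sub_C _) ?_ ?_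
  · exact Fintype.prod_dvd_of_coprime (pairwise_coprime_X_sub_C hx)
      fun i => dvd_iff_isRoot.2 (hroot i)
  · simpa using natDegree_le α n

/-- For `α > -1` the polynomial `L_n^α` has `n` distinct positive zeros. -/
lemma exists_strictMono_roots (n : ℕ) : ∀ α : ℝ, -1 < α → ∃ x : Fin n → ℝ, StrictMono x ∧
    (∀ i, 0 < x i) ∧ ∀ z, (laguerrePoly α n).eval z = 0 ↔ ∃ i, z = x i := by
  induction n with
  | zero => exact fun α _ => ⟨Fin.elim0, fun i => i.elim0, fun i => i.elim0, by simp [laguerrePoly]⟩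
  | succ n ih =>
    intro α hα
    obtain ⟨y, hy, hypos, hroot⟩ := ih (α + 1) (by linarith)
    set g : ℝ → ℝ := fun x => x ^ (α + 1) * Real.exp (-x) * (laguerrePoly (α + 1) n).eval x
    have hgc : Continuous g := by
      have := Real.continuous_rpow_const (q := α + 1) (by linarith)
      fun_prop
    set p : Fin (n + 1) → ℝ := Fin.cons 0 y with hp
    have hpmono : StrictMono p := by
      refine Fin.strictMono_iff_lt_succ.2 fun i => ?_
      refine Fin.cases (motive := fun j => j = i.castSucc → p j < p i.succ) ?_ ?_ i.castSucc rfl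
      · intro _
        simpa [hp] using hypos i
      · intro j hj
        have : j < i := by
          have := congrArg Fin.val hj
          rw [Fin.lt_def]
          simp at this
          omega
        simpa [hp] using hy this
    have hp0 : ∀ i, 0 ≤ p i := fun i =>
      Fin.cases (by simp [hp]) (fun j => by simpa [hp] using (hypos j).le) i
    have hgp : ∀ i, g (p i) = 0 := fun i => by
      refine Fin.cases ?_ (fun j => ?_) i
      · simp [g, hp, Real.zero_rpow (by linarith : α + 1 ≠ 0)]
      · simp [g, hp, (hroot (y j)).2 ⟨j, rfl⟩]
    have hzero : ∀ z, 0 < z → z ^ α * Real.exp (-z) *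
        (((n : ℝ) + 1) * (laguerrePoly α (n + 1)).eval z) = 0 →
        (laguerrePoly α (n + 1)).eval z = 0 := by
      intro z hz h
      have h1 := (Real.rpow_pos_of_pos hz α).ne'
      have h2 : (n : ℝ) + 1 ≠ 0 := by positivity
      simpa [h1, h2, (Real.exp_pos _).ne'] using h
    have hex : ∀ i, ∃ r, p i < r ∧ (∀ j, i < j → r < p j) ∧
        (laguerrePoly α (n + 1)).eval r = 0 := by
      intro i
      refine Fin.lastCases ?_ (fun k => ?_) i
      · have hlim : Tendsto g (𝓝[>] p (Fin.last n)) (𝓝 0) := by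
          have := (hgc.tendsto (p (Fin.last n))).mono_left
            (nhdsWithin_le_nhds (s := Set.Ioi (p (Fin.last n))))
          rwa [hgp] at this
        obtain ⟨r, hr, hr0⟩ := exists_hasDerivAt_eq_zero_Ioi hlim
          (tendsto_rpow_mul_exp_neg_mul_eval_atTop _ _)
          fun x hx => hasDerivAt_rpow_mul_exp_neg_mul_eval α n ((hp0 _).trans_lt hx)
        exact ⟨r, hr, fun j hj => absurd hj (Fin.le_last j).not_gt,
          hzero r ((hp0 _).trans_lt hr) hr0⟩
      · obtain ⟨r, hr, hr0⟩ := exists_hasDerivAt_eq_zero (hpmono k.castSucc_lt_succ)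
          hgc.continuousOn ((hgp _).trans (hgp _).symm)
          fun x hx => hasDerivAt_rpow_mul_exp_neg_mul_eval α n ((hp0 _).trans_lt hx.1)
        exact ⟨r, hr.1, fun j hj => hr.2.trans_le (hpmono.monotone
          (Fin.castSucc_lt_iff_succ_le.1 hj)), hzero r ((hp0 _).trans_lt hr.1) hr0⟩
    choose r hr1 hr2 hr0 using hex
    have hmono : StrictMono r := fun i j hij => (hr2 i j hij).trans (hr1 j)
    refine ⟨r, hmono, fun i => (hp0 i).trans_lt (hr1 i), fun z => ⟨fun hz => ?_, ?_⟩⟩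
    · rw [eq_C_mul_prod_of_roots hmono.injective hr0] at hz
      simpa [eval_prod, ne_zero, prod_eq_zero_iff, sub_eq_zero] using hz
    · rintro ⟨i, rfl⟩
      exact hr0 i

/-- Stieltjes' electrostatic equilibrium for the zeros of `L_n^α`. The summand `j = i` vanishes
because its denominator does. -/
lemma electrostatic_equilibrium {α : ℝ} {n : ℕ} {x : Fin n → ℝ} (hx : Function.Injective x)
    (hroot : ∀ i, (laguerrePoly α n).eval (x i) = 0) (i : Fin n) :
    x i - 2 * ∑ j, x i / (x i - x j) = α + 1 := by
  set c := (laguerrePoly α n).leadingCoeff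
  have hc : c ≠ 0 := leadingCoeff_ne_zero.2 (ne_zero α n)
  set q : ℝ[X] := ∏ j ∈ univ.erase i, (X - C (x j)) with hq
  have hfac : laguerrePoly α n = C c * ((X - C (x i)) * q) := by
    rw [hq, mul_prod_erase _ (fun j => X - C (x j)) (mem_univ i)]
    exact eq_C_mul_prod_of_roots hx hroot
  have hne : ∀ j ∈ univ.erase i, x i - x j ≠ 0 := fun j hj =>
    sub_ne_zero.2 (hx.ne (ne_of_mem_erase hj).symm)
  have hq0 : q.eval (x i) ≠ 0 := by
    simpa [hq, eval_prod, prod_ne_zero_iff] using hne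
  have hq' : (derivative q).eval (x i) = q.eval (x i) * ∑ j, 1 / (x i - x j) := by
    rw [← add_sum_erase _ _ (mem_univ i), sub_self, div_zero, zero_add, hq,
      derivative_prod_finset, eval_finsetSum, mul_sum]
    refine sum_congr rfl fun j hj => ?_
    rw [← mul_prod_erase _ _ hj]
    have := hne j hj
    simp only [derivative_X_sub_C, eval_mul, eval_sub, eval_X, eval_C, eval_one]
    field_simp
  have hode := congrArg (eval (x i)) (differential_equation α n)
  rw [hfac] at hode
  simp [hq', -one_div] at hode
  have hsum : ∑ j, x i / (x i - x j) = x i * ∑ j, 1 / (x i - x j) := by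
    rw [mul_sum]
    exact sum_congr rfl fun j _ => by ring
  rw [hsum]
  have : c * q.eval (x i) * (x i - 2 * (x i * ∑ j, 1 / (x i - x j)) - (α + 1)) = 0 := by
    linear_combination -hode
  have := (mul_eq_zero.1 this).resolve_left (mul_ne_zero hc hq0)
  linarith

end laguerrePoly

/-- A discrete maximum principle, applied to the ratios `u i / v i`: raising the electrostatic
charge at the origin pushes all the charges away from it. -/
lemma lt_of_electrostatic_lt {n : ℕ} {u v : Fin n → ℝ} (hu : StrictMono u) (hv : StrictMono v)
    (hv0 : ∀ i, 0 < v i)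
    (h : ∀ i, u i - 2 * ∑ j, u i / (u i - u j) < v i - 2 * ∑ j, v i / (v i - v j)) (i : Fin n) :
    u i < v i := by
  obtain ⟨k, -, hk⟩ := exists_max_image univ (fun i => u i / v i) ⟨i, mem_univ i⟩
  have hratio : ∀ j, u j * v k ≤ u k * v j := fun j =>
    (div_le_div_iff₀ (hv0 j) (hv0 k)).1 (hk j (mem_univ j))
  suffices hlt : u k < v k by
    have h1 := hratio i
    have h2 := mul_lt_mul_of_pos_right hlt (hv0 i)
    nlinarith [hv0 k]
  by_contra! hle
  refine (h k).not_ge (sub_le_sub hle (mul_le_mul_of_nonneg_left (sum_le_sum fun j _ => ?_)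
    zero_le_two))
  have h1 := hratio j
  rcases lt_trichotomy j k with hj | rfl | hj
  · rw [div_le_div_iff₀ (sub_pos.2 (hu hj)) (sub_pos.2 (hv hj))]
    linarith
  · simp
  · rw [← neg_sub (u j), ← neg_sub (v j), div_neg, div_neg, neg_le_neg_iff,
      div_le_div_iff₀ (sub_pos.2 (hv hj)) (sub_pos.2 (hu hj))]
    linarith

/-- The zeros of `L_{n+1}^α` and `L_n^{α+t}`, both listed increasingly, interlace. -/
lemma laguerrePoly.interlace {α t : ℝ} (ht0 : 0 ≤ t) (ht2 : t ≤ 2) {n : ℕ}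
    {x : Fin (n + 1) → ℝ} {y : Fin n → ℝ} (hx : StrictMono x) (hy : StrictMono y)
    (hx0 : ∀ i, 0 < x i) (hy0 : ∀ i, 0 < y i)
    (hxroot : ∀ i, (laguerrePoly α (n + 1)).eval (x i) = 0)
    (hyroot : ∀ i, (laguerrePoly (α + t) n).eval (y i) = 0) (i : Fin n) :
    x i.castSucc < y i ∧ y i < x i.succ := by
  have hex := electrostatic_equilibrium hx.injective hxroot
  have hey := electrostatic_equilibrium hy.injective hyroot
  constructor
  · refine lt_of_electrostatic_lt (u := fun i => x i.castSucc)
      (hx.comp Fin.strictMono_castSucc) hy hy0 (fun i => ?_) i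
    have h := hex i.castSucc
    rw [Fin.sum_univ_castSucc] at h
    have : x i.castSucc / (x i.castSucc - x (Fin.last n)) < 0 :=
      div_neg_of_pos_of_neg (hx0 _) (sub_neg.2 (hx i.castSucc_lt_last))
    linarith [hey i]
  · refine lt_of_electrostatic_lt (v := fun i => x i.succ) hy
      (hx.comp Fin.strictMono_succ) (fun i => hx0 _) (fun i => ?_) i
    have h := hex i.succ
    rw [Fin.sum_univ_succ] at h
    have : 1 < x i.succ / (x i.succ - x 0) :=
      (one_lt_div (sub_pos.2 (hx i.succ_pos))).2 (by linarith [hx0 0])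
    linarith [hey i]

theorem zeros_interlace_L_n_and_L_nsub1_shifted (α t : ℝ) (hα : α > -1) (ht0 : 0 < t)
    (ht2 : t ≤ 2) (n : ℕ) (hn : 2 ≤ n) :
    (∀ x x' : ℝ, x < x' → laguerre α n x = 0 → laguerre α n x' = 0 →
      (∀ u ∈ Set.Ioo x x', laguerre α n u ≠ 0) →
      ∃! y, y ∈ Set.Ioo x x' ∧ laguerre (α + t) (n - 1) y = 0) ∧
    (∀ y : ℝ, laguerre (α + t) (n - 1) y = 0 →
      ∃ x x' : ℝ, laguerre α n x = 0 ∧ laguerre α n x' = 0 ∧ x < y ∧ y < x') := by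
  obtain ⟨n, rfl⟩ : ∃ m, n = m + 1 := ⟨n - 1, by omega⟩
  rw [Nat.add_sub_cancel]
  obtain ⟨x, hx, hx0, hxroot⟩ := laguerrePoly.exists_strictMono_roots (n + 1) α hα
  obtain ⟨y, hy, hy0, hyroot⟩ := laguerrePoly.exists_strictMono_roots n (α + t) (by linarith)
  have hinter := laguerrePoly.interlace ht0.le ht2 hx hy hx0 hy0
    (fun i => (hxroot _).2 ⟨i, rfl⟩) (fun i => (hyroot _).2 ⟨i, rfl⟩)
  simp only [laguerrePoly.eval_eq_laguerre] at hxroot hyroot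
  refine ⟨fun a b hab ha hb hne => ?_, fun z hz => ?_⟩
  · obtain ⟨i, rfl⟩ := (hxroot a).1 ha
    obtain ⟨j, rfl⟩ := (hxroot b).1 hb
    have hij : i < j := hx.lt_iff_lt.1 hab
    obtain ⟨k, rfl⟩ := Fin.exists_castSucc_eq.2 (hij.trans_le (Fin.le_last j)).ne
    obtain rfl : j = k.succ := by
      by_contra hjk
      have hkj : k.succ < j := lt_of_le_of_ne (Fin.castSucc_lt_iff_succ_le.1 hij) (Ne.symm hjk)
      exact hne _ ⟨hx k.castSucc_lt_succ, hx hkj⟩ ((hxroot _).2 ⟨_, rfl⟩)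
    refine ⟨y k, ⟨hinter k, (hyroot _).2 ⟨k, rfl⟩⟩, ?_⟩
    rintro z ⟨hz, hz0⟩
    obtain ⟨l, rfl⟩ := (hyroot z).1 hz0
    have h1 := hx.lt_iff_lt.1 ((hinter l).1.trans hz.2)
    have h2 := hx.lt_iff_lt.1 (hz.1.trans (hinter l).2)
    rw [Fin.castSucc_lt_succ_iff] at h1 h2
    rw [le_antisymm h1 h2]
  · obtain ⟨i, rfl⟩ := (hyroot z).1 hz
    exact ⟨_, _, (hxroot _).2 ⟨i.castSucc, rfl⟩, (hxroot _).2 ⟨i.succ, rfl⟩, hinter i⟩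
end
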